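/- arXiv:1008.1006 — 5 statements merged into one kernel-verified Lean document; each statement's English description precedes it below -/
import Mathlib

section
/- Discrete Stratonovich formula (Lemma 3.1, first identity). Let a ∈ ℝ^d, h > 0, and let f = (f¹,…,f^d) : h²ℤ₊ × G(a,h) → ℝ^d be a time-dependent vector field such that for each fixed t ∈ h²ℤ₊ the field f(t,·) is discrete conservative on G(a,h). Let X_r = (X_r¹,…,X_r^d) (r ≥ 1) with each X_r^j ∈ {−1,1}, set S_0 = a, S_n = a + h(X_1 + ⋯ + X_n), and t_r = r h². Then for every n ≥ 1: T_{S_0}^{S_n}(f(t_n,·), γ'₀) h = Σ_{r=1}^{n} T_{S_0}^{S_r}( f(t_r,·) − f(t_{r−1},·), γ'₀) h + Σ_{r=1}^{n} Σ_{j=1}^{d} ½ [ f^j(t_{r−1}, S_{r−1} + Σ_{i=1}^{j−1} h X_r^i e_i) + f^j(t_{r−1}, S_{r−1} + Σ_{i=1}^{j} h X_r^i e_i) ] · h X_r^j. -/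
/- Discrete Stratonovich formula (Lemma 3.1, first identity). -/

namespace DiscretePaths

/-- The sign `±1` associated to a boolean orientation. -/
noncomputable def sgn (b : Bool) : ℝ := if b then 1 else -1

/-- The vector `μ h e_j` of an oriented grid edge, where the edge is encoded as
`e = (j, b)` with `μ = sgn b`. -/
noncomputable def stepVec (d : ℕ) (h : ℝ) (e : Fin d × Bool) : Fin d → ℝ :=
  fun i => if i = e.1 then sgn e.2 * h else 0

/-- The endpoint of a discrete path starting at `b`, given by its list of oriented edges. -/
noncomputable def pathEnd (d : ℕ) (h : ℝ) (b : Fin d → ℝ) :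
    List (Fin d × Bool) → (Fin d → ℝ)
  | [] => b
  | e :: γ => pathEnd d h (fun i => b i + stepVec d h e i) γ

/-- The trapezoidal sum `T_γ(f, γ'₀) h` of the vector field `f` over the discrete path
starting at `b` with oriented edges `γ`. -/
noncomputable def trapSum (d : ℕ) (h : ℝ) (f : (Fin d → ℝ) → Fin d → ℝ)
    (b : Fin d → ℝ) : List (Fin d × Bool) → ℝ
  | [] => 0
  | e :: γ => h / 2 * sgn e.2 * (f b e.1 + f (fun i => b i + stepVec d h e i) e.1)
      + trapSum d h f (fun i => b i + stepVec d h e i) γ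

/-- Membership in the grid `G(a,h) = a + hℤ^d`. -/
def InGrid (d : ℕ) (a : Fin d → ℝ) (h : ℝ) (x : Fin d → ℝ) : Prop :=
  ∃ k : Fin d → ℤ, ∀ i, x i = a i + h * k i

/-- A vector field on the grid `G(a,h)` is discrete conservative if its trapezoidal sum
over every closed discrete path vanishes. -/
def DiscreteConservative (d : ℕ) (a : Fin d → ℝ) (h : ℝ)
    (f : (Fin d → ℝ) → Fin d → ℝ) : Prop :=
  ∀ b, InGrid d a h b → ∀ γ : List (Fin d × Bool), pathEnd d h b γ = b →
    trapSum d h f b γ = 0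

end DiscretePaths

open DiscretePaths

namespace DiscretePaths

theorem trapSum_append (d : ℕ) (h : ℝ) (f : (Fin d → ℝ) → Fin d → ℝ)
    (γ δ : List (Fin d × Bool)) : ∀ b : Fin d → ℝ,
    trapSum d h f b (γ ++ δ) = trapSum d h f b γ + trapSum d h f (pathEnd d h b γ) δ := by
  induction γ with
  | nil => intro b; simp [trapSum, pathEnd]
  | cons e γ ih => intro b; simp only [List.cons_append, trapSum, pathEnd, ih]; ring

theorem pathEnd_append (d : ℕ) (h : ℝ)
    (γ δ : List (Fin d × Bool)) : ∀ b : Fin d → ℝ,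
    pathEnd d h b (γ ++ δ) = pathEnd d h (pathEnd d h b γ) δ := by
  induction γ with
  | nil => intro b; simp [pathEnd]
  | cons e γ ih => intro b; simp only [List.cons_append, pathEnd, ih]

theorem pathEnd_eq (d : ℕ) (h : ℝ) (γ : List (Fin d × Bool)) : ∀ (b : Fin d → ℝ) (i : Fin d),
    pathEnd d h b γ i = b i + (γ.map (fun e => stepVec d h e i)).sum := by
  induction γ with
  | nil => intro b i; simp [pathEnd]
  | cons e γ ih => intro b i; simp only [pathEnd, ih, List.map_cons, List.sum_cons]; ring

theorem exists_back (d : ℕ) (h : ℝ) (γ : List (Fin d × Bool)) (b : Fin d → ℝ) :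
    ∃ δ, pathEnd d h (pathEnd d h b γ) δ = b := by
  refine ⟨γ.map (fun e => (e.1, !e.2)), ?_⟩
  funext i
  rw [pathEnd_eq, pathEnd_eq, List.map_map]
  have : ∀ γ : List (Fin d × Bool), (γ.map (fun e => stepVec d h e i)).sum +
      (γ.map ((fun e => stepVec d h e i) ∘ (fun e => (e.1, !e.2)))).sum = 0 := by
    intro γ
    induction γ with
    | nil => simp
    | cons e γ ih =>
      have he : stepVec d h e i + stepVec d h (e.1, !e.2) i = 0 := by
        rcases e with ⟨j, _ | _⟩ <;> simp only [stepVec, sgn] <;> split_ifs <;> simp_all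
      simp only [List.map_cons, List.sum_cons, Function.comp] at ih ⊢
      linarith
  have := this γ
  linarith

theorem trapSum_indep (d : ℕ) (a : Fin d → ℝ) (h : ℝ) (f : (Fin d → ℝ) → Fin d → ℝ)
    (hf : DiscreteConservative d a h f) (γ δ : List (Fin d × Bool))
    (he : pathEnd d h a γ = pathEnd d h a δ) : trapSum d h f a γ = trapSum d h f a δ := by
  obtain ⟨η, hη⟩ := exists_back d h γ a
  have ha : InGrid d a h a := ⟨0, by simp⟩
  have h1 := hf a ha (γ ++ η) (by rw [pathEnd_append, hη])
  have h2 := hf a ha (δ ++ η) (by rw [pathEnd_append, ← he, hη])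
  rw [trapSum_append] at h1 h2
  rw [← he] at h2
  linarith

theorem trapSum_sub (d : ℕ) (h : ℝ) (f g : (Fin d → ℝ) → Fin d → ℝ)
    (γ : List (Fin d × Bool)) : ∀ b : Fin d → ℝ,
    trapSum d h (fun x j => f x j - g x j) b γ = trapSum d h f b γ - trapSum d h g b γ := by
  induction γ with
  | nil => intro b; simp [trapSum]
  | cons e γ ih => intro b; simp only [trapSum, ih]; ring

theorem ofFn_path (d : ℕ) (h : ℝ) (f : (Fin d → ℝ) → Fin d → ℝ) (m : ℕ) :
    ∀ (e : Fin m → Fin d × Bool) (p : Fin (m + 1) → Fin d → ℝ),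
    (∀ k, p k.succ = fun i => p k.castSucc i + stepVec d h (e k) i) →
    pathEnd d h (p 0) (List.ofFn e) = p (Fin.last m) ∧
    trapSum d h f (p 0) (List.ofFn e) = ∑ k, h / 2 * sgn (e k).2 *
      (f (p k.castSucc) (e k).1 + f (p k.succ) (e k).1) := by
  induction m with
  | zero => intro e p _; simp [pathEnd, trapSum]
  | succ m ih =>
    intro e p hp
    have h0 := hp 0
    simp only [Fin.castSucc_zero] at h0
    obtain ⟨h1, h2⟩ := ih (fun k => e k.succ) (fun k => p k.succ)
      (fun k => by have := hp k.succ; simpa using this)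
    rw [List.ofFn_succ, Fin.sum_univ_succ]
    simp only [pathEnd, trapSum]
    simp only [Fin.castSucc_zero]
    rw [← h0]
    refine ⟨?_, ?_⟩
    · rw [h1]; rfl
    · rw [h2]; rfl

end DiscretePaths

/-- **Discrete Stratonovich formula.**  Since `f(t,·)` is discrete conservative for each
`t`, trapezoidal sums between two grid points are path independent; accordingly the
identity is stated for an arbitrary discrete path `γ` from `S_0 = a` to `S_n` and
arbitrary discrete paths `γr r` from `S_0` to `S_r`. -/
theorem discrete_stratonovich
    (d : ℕ) (a : Fin d → ℝ) (h : ℝ) (hh : 0 < h)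
    (f : ℕ → (Fin d → ℝ) → Fin d → ℝ)
    (hf : ∀ t : ℕ, DiscreteConservative d a h (f t))
    (X : ℕ → Fin d → ℝ)
    (hX : ∀ r : ℕ, ∀ j : Fin d, X r j = 1 ∨ X r j = -1)
    (S : ℕ → Fin d → ℝ)
    (hS : ∀ n i, S n i = a i + h * ∑ r ∈ Finset.range n, X (r + 1) i)
    (n : ℕ) (hn : 1 ≤ n)
    (γ : List (Fin d × Bool)) (hγ : pathEnd d h a γ = S n)
    (γr : ℕ → List (Fin d × Bool)) (hγr : ∀ r, pathEnd d h a (γr r) = S r) :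
    trapSum d h (f n) a γ
      = (∑ r ∈ Finset.Icc 1 n,
          trapSum d h (fun x j => f r x j - f (r - 1) x j) a (γr r))
        + ∑ r ∈ Finset.Icc 1 n, ∑ j : Fin d,
            (f (r - 1) (fun i => S (r - 1) i + if (i : ℕ) < (j : ℕ) then h * X r i else 0) j
              + f (r - 1) (fun i => S (r - 1) i + if (i : ℕ) ≤ (j : ℕ) then h * X r i else 0) j)
              / 2 * (h * X r j) := by
  clear hn
  have key : ∀ r, pathEnd d h (S r) (List.ofFn fun j => (j, decide (X (r + 1) j = 1))) = S (r + 1) ∧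
      trapSum d h (f r) (S r) (List.ofFn fun j => (j, decide (X (r + 1) j = 1)))
      = ∑ j : Fin d,
            (f r (fun i => S r i + if (i : ℕ) < (j : ℕ) then h * X (r + 1) i else 0) j
              + f r (fun i => S r i + if (i : ℕ) ≤ (j : ℕ) then h * X (r + 1) i else 0) j)
              / 2 * (h * X (r + 1) j) := by
    intro r
    have hs : ∀ j, sgn (decide (X (r + 1) j = 1)) = X (r + 1) j := by
      intro j
      rcases hX (r + 1) j with hx | hx <;> rw [hx] <;> norm_num [sgn]
    have hp := ofFn_path d h (f r) d (fun j => (j, decide (X (r + 1) j = 1)))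
      (fun k i => S r i + if (i : ℕ) < (k : ℕ) then h * X (r + 1) i else 0) (by
        intro k
        funext i
        simp only [stepVec, hs, Fin.val_succ, Fin.val_castSucc]
        rcases lt_trichotomy (i : ℕ) (k : ℕ) with hlt | heq | hgt
        · have hne : i ≠ k := fun hc => by simp [hc] at hlt
          rw [if_pos (by omega), if_pos hlt, if_neg hne]; ring
        · have hne : i = k := Fin.ext heq
          subst hne
          simp; ring
        · have hne : i ≠ k := fun hc => by simp [hc] at hgt
          rw [if_neg (by omega), if_neg (by omega), if_neg hne]; ring)
    obtain ⟨h1, h2⟩ := hp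
    have e0 : (fun i => S r i + if (i : ℕ) < ((0 : Fin (d + 1)) : ℕ) then h * X (r + 1) i else 0)
        = S r := by
      funext i; simp
    rw [e0] at h1 h2
    refine ⟨?_, ?_⟩
    · rw [h1]
      funext i
      simp only [Fin.val_last, i.isLt, if_true, hS, Finset.sum_range_succ]
      ring
    · rw [h2]
      refine Finset.sum_congr rfl fun j _ => ?_
      simp only [hs, Fin.val_succ, Fin.val_castSucc, Nat.lt_succ_iff]
      ring
  induction n generalizing γ with
  | zero =>
    have hS0 : S 0 = a := by funext i; simp [hS]
    simpa using hf 0 a ⟨0, by simp⟩ γ (by rw [hγ, hS0])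
  | succ n ih =>
    have hi := ih (γr n) (hγr n)
    obtain ⟨k1, k2⟩ := key n
    rw [Finset.sum_Icc_succ_top (by omega), Finset.sum_Icc_succ_top (by omega)]
    simp only [Nat.add_sub_cancel]
    rw [← k2, trapSum_sub]
    have e1 := trapSum_indep d a h (f (n + 1)) (hf _) γ (γr (n + 1)) (by rw [hγ, hγr])
    have e2 := trapSum_indep d a h (f n) (hf _) (γr (n + 1))
      (γr n ++ List.ofFn fun j => (j, decide (X (n + 1) j = 1)))
      (by rw [pathEnd_append, hγr, hγr, k1])
    rw [trapSum_append, hγr] at e2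
    linarith
end

section
/- A planar vector field f = (f¹, f²) : G(a,h) → ℝ² is discrete conservative on the grid G(a,h) if and only if its discrete curl vanishes at every grid point, i.e. (curl_h f)(x) = 0 for all x ∈ G(a,h), where (curl_h f)(x) := (1/(2h)) { f¹(x¹,x²) + f¹(x¹+h,x²) + f²(x¹+h,x²) + f²(x¹+h,x²+h) − f¹(x¹+h,x²+h) − f¹(x¹,x²+h) − f²(x¹,x²+h) − f²(x¹,x²) } is (1/h²) times the trapezoidal sum over the counterclockwise directed boundary of the elementary square [x¹, x¹+h] × [x², x²+h]. -/
open DiscretePaths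

/-- The discrete curl of a planar vector field `f = (f¹, f²)` at `x`:
`(1/h²)` times the trapezoidal sum over the counterclockwise boundary of the elementary
square `[x¹, x¹+h] × [x², x²+h]`.  Here `f p 0 = f¹(p)` and `f p 1 = f²(p)`. -/
noncomputable def curlh (h : ℝ) (f : (Fin 2 → ℝ) → Fin 2 → ℝ) (x : Fin 2 → ℝ) : ℝ :=
  1 / (2 * h) *
    (f x 0 + f ![x 0 + h, x 1] 0 + f ![x 0 + h, x 1] 1 + f ![x 0 + h, x 1 + h] 1
      - f ![x 0 + h, x 1 + h] 0 - f ![x 0, x 1 + h] 0 - f ![x 0, x 1 + h] 1 - f x 1)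

theorem exists_int_antideriv (u : ℤ → ℝ) : ∃ U : ℤ → ℝ, ∀ n, U (n + 1) - U n = u n := by
  refine ⟨fun n => ∑ i ∈ Finset.range n.toNat, u i
    - ∑ i ∈ Finset.range (-n).toNat, u (-(i + 1 : ℤ)), ?_⟩
  intro n
  rcases le_or_gt 0 n with hn | hn
  · obtain ⟨k, rfl⟩ := Int.eq_ofNat_of_zero_le hn
    have h1 : ((k : ℤ) + 1).toNat = k + 1 := by omega
    have h2 : (-((k : ℤ) + 1)).toNat = 0 := by omega
    have h3 : (-(k : ℤ)).toNat = 0 := by omega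
    simp only [h1, h2, h3, Int.toNat_natCast, Finset.sum_range_succ, Finset.sum_range_zero]
    ring
  · obtain ⟨k, hk⟩ : ∃ k : ℕ, n = -((k : ℤ) + 1) := ⟨(-n - 1).toNat, by omega⟩
    subst hk
    have h1 : (-((k : ℤ) + 1) + 1).toNat = 0 := by omega
    have h2 : (-((k : ℤ) + 1)).toNat = 0 := by omega
    have h3 : (-(-((k : ℤ) + 1) + 1)).toNat = k := by omega
    have h4 : (-(-((k : ℤ) + 1))).toNat = k + 1 := by omega
    simp only [h1, h2, h3, h4, Finset.sum_range_succ, Finset.sum_range_zero]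
    ring

/-- The grid point with integer coordinates `(m, n)`. -/
noncomputable def gridPt (a : Fin 2 → ℝ) (h : ℝ) (m n : ℤ) : Fin 2 → ℝ :=
  ![a 0 + h * m, a 1 + h * n]

theorem inGrid_gridPt (a : Fin 2 → ℝ) (h : ℝ) (m n : ℤ) : InGrid 2 a h (gridPt a h m n) := by
  refine ⟨![m, n], fun i => ?_⟩
  fin_cases i <;> simp [gridPt]

theorem exists_gridPt (a : Fin 2 → ℝ) (h : ℝ) (x : Fin 2 → ℝ) (hx : InGrid 2 a h x) :
    ∃ m n, x = gridPt a h m n := by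
  obtain ⟨k, hk⟩ := hx
  refine ⟨k 0, k 1, ?_⟩
  funext i
  fin_cases i <;> simp [gridPt, hk]

theorem gridPt_inj (a : Fin 2 → ℝ) (h : ℝ) (hh : 0 < h) (m n m' n' : ℤ)
    (H : gridPt a h m n = gridPt a h m' n') : m = m' ∧ n = n' := by
  have h0 := congrFun H 0
  have h1 := congrFun H 1
  simp [gridPt, hh.ne'] at h0 h1
  exact ⟨h0, h1⟩

theorem gridPt_step0 (a : Fin 2 → ℝ) (h : ℝ) (m n : ℤ) :
    (fun i => gridPt a h m n i + stepVec 2 h (0, true) i) = gridPt a h (m + 1) n := by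
  funext i
  fin_cases i <;> simp [gridPt, stepVec, sgn] <;> ring

theorem gridPt_step0' (a : Fin 2 → ℝ) (h : ℝ) (m n : ℤ) :
    (fun i => gridPt a h m n i + stepVec 2 h (0, false) i) = gridPt a h (m - 1) n := by
  funext i
  fin_cases i <;> simp [gridPt, stepVec, sgn] <;> ring

theorem gridPt_step1 (a : Fin 2 → ℝ) (h : ℝ) (m n : ℤ) :
    (fun i => gridPt a h m n i + stepVec 2 h (1, true) i) = gridPt a h m (n + 1) := by
  funext i
  fin_cases i <;> simp [gridPt, stepVec, sgn] <;> ring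

theorem gridPt_step1' (a : Fin 2 → ℝ) (h : ℝ) (m n : ℤ) :
    (fun i => gridPt a h m n i + stepVec 2 h (1, false) i) = gridPt a h m (n - 1) := by
  funext i
  fin_cases i <;> simp [gridPt, stepVec, sgn] <;> ring

theorem curlh_gridPt (a : Fin 2 → ℝ) (h : ℝ) (f : (Fin 2 → ℝ) → Fin 2 → ℝ) (m n : ℤ) :
    curlh h f (gridPt a h m n) = 1 / (2 * h) *
      (f (gridPt a h m n) 0 + f (gridPt a h (m + 1) n) 0 + f (gridPt a h (m + 1) n) 1
        + f (gridPt a h (m + 1) (n + 1)) 1 - f (gridPt a h (m + 1) (n + 1)) 0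
        - f (gridPt a h m (n + 1)) 0 - f (gridPt a h m (n + 1)) 1 - f (gridPt a h m n) 1) := by
  have e (k : ℤ) (c : ℝ) : c + h * ((k + 1 : ℤ) : ℝ) = c + h * k + h := by push_cast; ring
  simp only [curlh, gridPt, e, Matrix.cons_val_zero, Matrix.cons_val_one]

theorem trapSum_potential (a : Fin 2 → ℝ) (h : ℝ) (f : (Fin 2 → ℝ) → Fin 2 → ℝ)
    (F : ℤ → ℤ → ℝ)
    (h0 : ∀ m n, F (m + 1) n - F m n
      = h / 2 * (f (gridPt a h m n) 0 + f (gridPt a h (m + 1) n) 0))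
    (h1 : ∀ m n, F m (n + 1) - F m n
      = h / 2 * (f (gridPt a h m n) 1 + f (gridPt a h m (n + 1)) 1))
    (γ : List (Fin 2 × Bool)) : ∀ m n : ℤ, ∃ m' n' : ℤ,
      pathEnd 2 h (gridPt a h m n) γ = gridPt a h m' n' ∧
      trapSum 2 h f (gridPt a h m n) γ = F m' n' - F m n := by
  induction γ with
  | nil => intro m n; exact ⟨m, n, rfl, by simp [trapSum]⟩
  | cons e γ ih =>
    intro m n
    obtain ⟨j, b⟩ := e
    fin_cases j <;> cases b <;> simp only [Fin.zero_eta, Fin.mk_one, pathEnd, trapSum,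
      gridPt_step0, gridPt_step0', gridPt_step1, gridPt_step1']
    · obtain ⟨m', n', he, ht⟩ := ih (m - 1) n
      refine ⟨m', n', he, ?_⟩
      have := h0 (m - 1) n
      rw [sub_add_cancel] at this
      rw [ht]; simp [sgn]; linarith
    · obtain ⟨m', n', he, ht⟩ := ih (m + 1) n
      refine ⟨m', n', he, ?_⟩
      have := h0 m n
      rw [ht]; simp [sgn]; linarith
    · obtain ⟨m', n', he, ht⟩ := ih m (n - 1)
      refine ⟨m', n', he, ?_⟩
      have := h1 m (n - 1)
      rw [sub_add_cancel] at this
      rw [ht]; simp [sgn]; linarith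
    · obtain ⟨m', n', he, ht⟩ := ih m (n + 1)
      refine ⟨m', n', he, ?_⟩
      have := h1 m n
      rw [ht]; simp [sgn]; linarith

theorem exists_potential (u v : ℤ → ℤ → ℝ)
    (H : ∀ m n, u m n + v (m + 1) n - u m (n + 1) - v m n = 0) :
    ∃ F : ℤ → ℤ → ℝ, (∀ m n, F (m + 1) n - F m n = u m n) ∧
      (∀ m n, F m (n + 1) - F m n = v m n) := by
  obtain ⟨S, hS⟩ := exists_int_antideriv (fun m => u m 0)
  choose V hV using fun m => exists_int_antideriv (v m)
  refine ⟨fun m n => S m + V m n - V m 0, ?_, ?_⟩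
  · intro m n
    induction n using Int.induction_on with
    | zero => have := hS m; simp only at this ⊢; linarith
    | succ i ih =>
      have := H m i
      have := hV m i
      have := hV (m + 1) i
      simp only at *; linarith
    | pred i ih =>
      have e1 := H m (-(i : ℤ) - 1)
      have e2 := hV m (-(i : ℤ) - 1)
      have e3 := hV (m + 1) (-(i : ℤ) - 1)
      rw [sub_add_cancel] at e1 e2 e3
      simp only at *; linarith
  · intro m n
    have := hV m n
    simp only; linarith

/-- A planar vector field on the grid `G(a,h)` is discrete conservative if and only if
its discrete curl vanishes at every grid point. -/
theorem discreteConservative_iff_curlh_eq_zero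
    (a : Fin 2 → ℝ) (h : ℝ) (hh : 0 < h)
    (f : (Fin 2 → ℝ) → Fin 2 → ℝ) :
    DiscreteConservative 2 a h f ↔ ∀ x, InGrid 2 a h x → curlh h f x = 0 := by
  constructor
  · intro hc x hx
    obtain ⟨m, n, rfl⟩ := exists_gridPt a h x hx
    have hend : pathEnd 2 h (gridPt a h m n) [(0, true), (1, true), (0, false), (1, false)]
        = gridPt a h m n := by
      rw [pathEnd, gridPt_step0, pathEnd, gridPt_step1, pathEnd, gridPt_step0', pathEnd,
        gridPt_step1', pathEnd, add_sub_cancel_right, add_sub_cancel_right]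
    have ht := hc _ hx _ hend
    rw [trapSum, gridPt_step0, trapSum, gridPt_step1, trapSum, gridPt_step0', trapSum,
        gridPt_step1', trapSum, add_sub_cancel_right, add_sub_cancel_right] at ht
    simp only [sgn, if_true, Bool.false_eq_true, if_false] at ht
    rw [curlh_gridPt]
    have h2 : h / 2 ≠ 0 := by positivity
    apply mul_eq_zero_of_right
    apply (mul_eq_zero.mp (_ : h / 2 * _ = 0)).resolve_left h2
    linear_combination ht
  · intro hc b hb γ hγ
    obtain ⟨m, n, rfl⟩ := exists_gridPt a h b hb
    obtain ⟨F, h0, h1⟩ := exists_potential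
      (fun m n => h / 2 * (f (gridPt a h m n) 0 + f (gridPt a h (m + 1) n) 0))
      (fun m n => h / 2 * (f (gridPt a h m n) 1 + f (gridPt a h m (n + 1)) 1)) (by
        intro m n
        have := hc _ (inGrid_gridPt a h m n)
        rw [curlh_gridPt] at this
        have := (mul_eq_zero.mp this).resolve_left (by positivity)
        linear_combination h / 2 * this)
    obtain ⟨m', n', he, ht⟩ := trapSum_potential a h f F h0 h1 γ m n
    obtain ⟨rfl, rfl⟩ := gridPt_inj a h hh _ _ _ _ (he.symm.trans hγ)
    rw [ht, sub_self]
end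

section
/- Discrete curl bound for a gradient field. Let g ∈ C³(ℝ²), h > 0, x = (x¹, x²) ∈ ℝ², and let E = [x¹, x¹+h] × [x², x²+h]. Define (curl_h ∇g)(x) := (1/(2h)) { D₁g(x¹,x²) + D₁g(x¹+h,x²) + D₂g(x¹+h,x²) + D₂g(x¹+h,x²+h) − D₁g(x¹+h,x²+h) − D₁g(x¹,x²+h) − D₂g(x¹,x²+h) − D₂g(x¹,x²) }, where D₁, D₂ are the partial derivatives. Then |(curl_h ∇g)(x)| ≤ (1/6) h ε_E, where ε_E := sup_{u, v ∈ E} max( |D₁³g(u) − D₁³g(v)|, |D₂³g(u) − D₂³g(v)| ) and D₁³g = ∂³g/∂(x¹)³, D₂³g = ∂³g/∂(x²)³. -/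
/-- The partial derivative of `g : ℝ² → ℝ` in the `j`-th coordinate direction. -/
noncomputable def pderiv2 (j : Fin 2) (g : (Fin 2 → ℝ) → ℝ) : (Fin 2 → ℝ) → ℝ :=
  fun x => fderiv ℝ g x (Pi.single j 1)

theorem pderiv2_contDiff (j : Fin 2) (g : (Fin 2 → ℝ) → ℝ) (m n : WithTop ℕ∞) (hmn : m + 1 ≤ n)
    (hg : ContDiff ℝ n g) : ContDiff ℝ m (pderiv2 j g) :=
  (hg.fderiv_right hmn).clm_apply contDiff_const

theorem pderiv2_line (j : Fin 2) (F : (Fin 2 → ℝ) → ℝ) (hF : Differentiable ℝ F)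
    (p : Fin 2 → ℝ) (t : ℝ) :
    HasDerivAt (fun t : ℝ => F (p + t • Pi.single j (1 : ℝ)))
      (pderiv2 j F (p + t • Pi.single j (1 : ℝ))) t := by
  have h1 : HasDerivAt (fun t : ℝ => p + t • (Pi.single j (1 : ℝ) : Fin 2 → ℝ))
      (Pi.single j (1 : ℝ)) t := by
    simpa using ((hasDerivAt_id t).smul_const (Pi.single j (1 : ℝ) : Fin 2 → ℝ)).const_add p
  exact (hF _).hasFDerivAt.comp_hasDerivAt t h1

theorem trapezoid_exists (f f1 f2 f3 : ℝ → ℝ) (h : ℝ) (hh : 0 < h)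
    (d0 : ∀ t, HasDerivAt f (f1 t) t) (d1 : ∀ t, HasDerivAt f1 (f2 t) t)
    (d2 : ∀ t, HasDerivAt f2 (f3 t) t) :
    ∃ s ∈ Set.Icc (0 : ℝ) h, h * (f1 0 + f1 h) - 2 * (f h - f 0) = f3 s / 6 * h ^ 3 := by
  obtain ⟨K, hK⟩ : ∃ K : ℝ, h * (f1 0 + f1 h) - 2 * (f h - f 0) = K * h ^ 3 :=
    ⟨(h * (f1 0 + f1 h) - 2 * (f h - f 0)) / h ^ 3, by field_simp⟩
  have e1 : ∀ t, HasDerivAt (fun t => t * (f1 0 + f1 t) - 2 * (f t - f 0) - K * t ^ 3)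
      (f1 0 - f1 t + t * f2 t - 3 * K * t ^ 2) t := by
    intro t
    have := (((hasDerivAt_id t).mul ((d1 t).const_add (f1 0))).sub
      (((d0 t).sub_const (f 0)).const_mul 2)).sub ((hasDerivAt_pow 3 t).const_mul K)
    refine this.congr_deriv ?_
    simp
    ring
  have e2 : ∀ t, HasDerivAt (fun t => f1 0 - f1 t + t * f2 t - 3 * K * t ^ 2)
      (t * f3 t - 6 * K * t) t := by
    intro t
    have := ((((d1 t).const_sub (f1 0))).add
      ((hasDerivAt_id t).mul (d2 t))).sub ((hasDerivAt_pow 2 t).const_mul (3 * K))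
    refine this.congr_deriv ?_
    simp
    ring
  obtain ⟨c, hc, hc0⟩ := exists_hasDerivAt_eq_zero hh
    (fun t _ => (e1 t).continuousAt.continuousWithinAt) (by simp; linarith) (fun t _ => e1 t)
  obtain ⟨s, hs, hs0⟩ := exists_hasDerivAt_eq_zero hc.1
    (fun t _ => (e2 t).continuousAt.continuousWithinAt) (by simp; linarith) (fun t _ => e2 t)
  refine ⟨s, ⟨hs.1.le, (hs.2.trans hc.2).le⟩, ?_⟩
  have : f3 s = 6 * K := by
    have h1 : s * (f3 s - 6 * K) = 0 := by linarith
    rcases mul_eq_zero.1 h1 with h2 | h2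
    · exact absurd h2 hs.1.ne'
    · linarith
  rw [hK, this]; ring

theorem edge_exists (j : Fin 2) (g : (Fin 2 → ℝ) → ℝ) (hg : ContDiff ℝ 3 g)
    (h : ℝ) (hh : 0 < h) (p q : Fin 2 → ℝ) (hq : q = p + h • Pi.single j (1 : ℝ)) :
    ∃ u ∈ Set.Icc p q, h * (pderiv2 j g p + pderiv2 j g q) - 2 * (g q - g p)
      = pderiv2 j (pderiv2 j (pderiv2 j g)) u / 6 * h ^ 3 := by
  have c1 := pderiv2_contDiff j g 2 3 (by norm_num) hg
  have c2 := pderiv2_contDiff j _ 1 2 (by norm_num) c1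
  obtain ⟨s, hs, e⟩ := trapezoid_exists _ _ _ _ h hh
    (pderiv2_line j g (hg.differentiable (by norm_num)) p)
    (pderiv2_line j _ (c1.differentiable (by norm_num)) p)
    (pderiv2_line j _ (c2.differentiable (by norm_num)) p)
  have hn : (0 : Fin 2 → ℝ) ≤ Pi.single j (1 : ℝ) := by simp
  refine ⟨p + s • Pi.single j (1 : ℝ), ⟨?_, ?_⟩, ?_⟩
  · exact le_add_of_nonneg_right (smul_nonneg hs.1 hn)
  · rw [hq]
    exact add_le_add_right (smul_le_smul_of_nonneg_right hs.2 hn) p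
  · simpa [hq] using e

theorem discrete_curl_grad_bound
    (g : (Fin 2 → ℝ) → ℝ) (hg : ContDiff ℝ 3 g)
    (h : ℝ) (hh : 0 < h) (x : Fin 2 → ℝ) :
    |1 / (2 * h) *
        (pderiv2 0 g x + pderiv2 0 g ![x 0 + h, x 1] + pderiv2 1 g ![x 0 + h, x 1]
          + pderiv2 1 g ![x 0 + h, x 1 + h] - pderiv2 0 g ![x 0 + h, x 1 + h]
          - pderiv2 0 g ![x 0, x 1 + h] - pderiv2 1 g ![x 0, x 1 + h] - pderiv2 1 g x)|
      ≤ 1 / 6 * h *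
        sSup {c : ℝ | ∃ u ∈ Set.Icc x (fun i => x i + h), ∃ v ∈ Set.Icc x (fun i => x i + h),
          c = max |pderiv2 0 (pderiv2 0 (pderiv2 0 g)) u - pderiv2 0 (pderiv2 0 (pderiv2 0 g)) v|
                  |pderiv2 1 (pderiv2 1 (pderiv2 1 g)) u - pderiv2 1 (pderiv2 1 (pderiv2 1 g)) v|} := by
  have hcont : ∀ j, Continuous (pderiv2 j (pderiv2 j (pderiv2 j g))) := fun j =>
    (pderiv2_contDiff j _ 0 1 (by norm_num) (pderiv2_contDiff j _ 1 2 (by norm_num)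
      (pderiv2_contDiff j g 2 3 (by norm_num) hg))).continuous
  obtain ⟨u1, hu1, E1⟩ := edge_exists 0 g hg h hh x ![x 0 + h, x 1]
    (by ext i; fin_cases i <;> simp)
  obtain ⟨u2, hu2, E2⟩ := edge_exists 1 g hg h hh ![x 0 + h, x 1] ![x 0 + h, x 1 + h]
    (by ext i; fin_cases i <;> simp)
  obtain ⟨u3, hu3, E3⟩ := edge_exists 0 g hg h hh ![x 0, x 1 + h] ![x 0 + h, x 1 + h]
    (by ext i; fin_cases i <;> simp)
  obtain ⟨u4, hu4, E4⟩ := edge_exists 1 g hg h hh x ![x 0, x 1 + h]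
    (by ext i; fin_cases i <;> simp)
  have m1 : u1 ∈ Set.Icc x (fun i => x i + h) :=
    Set.Icc_subset_Icc le_rfl (by intro i; fin_cases i <;> simp [hh.le]) hu1
  have m2 : u2 ∈ Set.Icc x (fun i => x i + h) :=
    Set.Icc_subset_Icc (by intro i; fin_cases i <;> simp [hh.le])
      (by intro i; fin_cases i <;> simp) hu2
  have m3 : u3 ∈ Set.Icc x (fun i => x i + h) :=
    Set.Icc_subset_Icc (by intro i; fin_cases i <;> simp [hh.le])
      (by intro i; fin_cases i <;> simp) hu3
  have m4 : u4 ∈ Set.Icc x (fun i => x i + h) :=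
    Set.Icc_subset_Icc le_rfl (by intro i; fin_cases i <;> simp [hh.le]) hu4
  generalize hG0 : pderiv2 0 (pderiv2 0 (pderiv2 0 g)) = G0 at *
  generalize hG1 : pderiv2 1 (pderiv2 1 (pderiv2 1 g)) = G1 at *
  have k0 : Continuous G0 := hG0 ▸ hcont 0
  have k1 : Continuous G1 := hG1 ▸ hcont 1
  set S := {c : ℝ | ∃ u ∈ Set.Icc x (fun i => x i + h), ∃ v ∈ Set.Icc x (fun i => x i + h),
          c = max |G0 u - G0 v| |G1 u - G1 v|} with hS
  have hb : BddAbove S := by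
    have hc : IsCompact ((Set.Icc x (fun i => x i + h)) ×ˢ (Set.Icc x (fun i => x i + h))) :=
      isCompact_Icc.prod isCompact_Icc
    have hf : Continuous (fun w : (Fin 2 → ℝ) × (Fin 2 → ℝ) =>
        max |G0 w.1 - G0 w.2| |G1 w.1 - G1 w.2|) := by fun_prop
    refine (hc.bddAbove_image hf.continuousOn).mono ?_
    rintro c ⟨u, hu, v, hv, rfl⟩
    exact ⟨(u, v), ⟨hu, hv⟩, rfl⟩
  have b0 : |G0 u1 - G0 u3| ≤ sSup S :=
    (le_max_left _ _).trans (le_csSup hb ⟨u1, m1, u3, m3, rfl⟩)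
  have b1 : |G1 u2 - G1 u4| ≤ sSup S :=
    (le_max_right _ _).trans (le_csSup hb ⟨u2, m2, u4, m4, rfl⟩)
  have key : 1 / (2 * h) *
        (pderiv2 0 g x + pderiv2 0 g ![x 0 + h, x 1] + pderiv2 1 g ![x 0 + h, x 1]
          + pderiv2 1 g ![x 0 + h, x 1 + h] - pderiv2 0 g ![x 0 + h, x 1 + h]
          - pderiv2 0 g ![x 0, x 1 + h] - pderiv2 1 g ![x 0, x 1 + h] - pderiv2 1 g x)
      = 1 / 12 * h * ((G0 u1 - G0 u3) + (G1 u2 - G1 u4)) := by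
    have hne : h ≠ 0 := hh.ne'
    have : 2 * h ^ 2 ≠ 0 := by positivity
    apply mul_left_cancel₀ this
    field_simp
    apply mul_left_cancel₀ hne
    linarith
  rw [key, abs_mul, abs_of_pos (by positivity : 0 < 1 / 12 * h)]
  have := (abs_add_le (G0 u1 - G0 u3) (G1 u2 - G1 u4)).trans (add_le_add b0 b1)
  nlinarith
end

section
/- Existence of a discrete conservative approximation of a gradient (Lemma 4.1). Let a ∈ ℝ², h > 0, R > 0, and g ∈ C³(ℝ²). Define ε(h) := sup { |D_j³g(x) − D_j³g(y)| : |x − a| ≤ R + h, |y − a| ≤ R + h, |x − y| ≤ h√2, j = 1, 2 }, where D_j³g is the third pure partial derivative of g in the j-th coordinate. Then there exists a discrete conservative vector field f = (f¹, f²) on the grid G(a,h) = a + hℤ² such that sup { |f(x) − (∇g)(x)| : x ∈ G(a,h), |x − a| ≤ R } ≤ (R/6) · h · ε(h). -/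
open DiscretePaths

/-- The Euclidean norm on the plane (represented as `Fin 2 → ℝ`). -/
noncomputable def enorm2 (x : Fin 2 → ℝ) : ℝ := Real.sqrt (x 0 ^ 2 + x 1 ^ 2)


lemma conservative_of_potential (a : Fin 2 → ℝ) (h : ℝ)
    (f : (Fin 2 → ℝ) → Fin 2 → ℝ) (Φ : (Fin 2 → ℝ) → ℝ)
    (H : ∀ x, InGrid 2 a h x → ∀ j : Fin 2,
      h / 2 * (f x j + f (x + Pi.single j h) j) = Φ (x + Pi.single j h) - Φ x) :
    DiscreteConservative 2 a h f := by
  have step : ∀ x, InGrid 2 a h x → ∀ e : Fin 2 × Bool,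
      InGrid 2 a h (fun i => x i + stepVec 2 h e i) ∧
      h / 2 * sgn e.2 * (f x e.1 + f (fun i => x i + stepVec 2 h e i) e.1)
        = Φ (fun i => x i + stepVec 2 h e i) - Φ x := by
    rintro x ⟨k, hk⟩ ⟨j, b⟩
    have hgrid : InGrid 2 a h (fun i => x i + stepVec 2 h (j, b) i) := by
      refine ⟨fun i => k i + (if i = j then (if b then 1 else -1) else 0), fun i => ?_⟩
      simp only [stepVec, sgn, hk i]
      split_ifs <;> push_cast <;> ring
    refine ⟨hgrid, ?_⟩
    cases b with
    | true =>
      have e1 : (fun i => x i + stepVec 2 h (j, true) i) = x + Pi.single j h := by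
        ext i
        simp [stepVec, sgn, Pi.single_apply]
      rw [e1]
      have := H x ⟨k, hk⟩ j
      simpa [sgn] using this
    | false =>
      have := H _ hgrid j
      have e1 : (fun i => x i + stepVec 2 h (j, false) i) + Pi.single j h = x := by
        ext i
        simp only [stepVec, sgn, Pi.single_apply, Pi.add_apply]
        split_ifs <;> simp_all
      rw [e1] at this
      simp only [sgn]
      simp only [Bool.false_eq_true, if_false]
      linarith
  have main : ∀ γ : List (Fin 2 × Bool), ∀ b, InGrid 2 a h b →
      trapSum 2 h f b γ = Φ (pathEnd 2 h b γ) - Φ b := by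
    intro γ
    induction γ with
    | nil => intro b _; simp [trapSum, pathEnd]
    | cons e γ ih =>
      intro b hb
      obtain ⟨h1, h2⟩ := step b hb e
      rw [trapSum, pathEnd, ih _ h1, h2]
      ring
  intro b hb γ hγ
  rw [main γ b hb, hγ, sub_self]

lemma exists_recursion (v : ℤ → ℝ) (u0 : ℝ) :
    ∃ u : ℤ → ℝ, u 0 = u0 ∧ ∀ n, u n + u (n + 1) = v n := by
  -- forward and backward sequences
  let F : ℕ → ℝ := fun n => Nat.rec u0 (fun k r => v k - r) n
  let B : ℕ → ℝ := fun n => Nat.rec u0 (fun k r => v (-(k : ℤ) - 1) - r) n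
  refine ⟨fun n => if 0 ≤ n then F n.toNat else B (-n).toNat, by simp [F], fun n => ?_⟩
  rcases le_or_gt 0 n with hn | hn
  · lift n to ℕ using hn
    have h1 : (0 : ℤ) ≤ (n : ℤ) + 1 := by omega
    have h2 : ((n : ℤ) + 1).toNat = n + 1 := by omega
    simp only [h1, h2, if_true, Int.natCast_nonneg, Int.toNat_natCast]
    change F n + (v n - F n) = v n
    ring
  · obtain ⟨m, rfl⟩ : ∃ m : ℕ, n = -(m : ℤ) - 1 := ⟨(-n - 1).toNat, by omega⟩
    have h1 : (-(-(m : ℤ) - 1)).toNat = m + 1 := by omega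
    have h3 : (if (0 : ℤ) ≤ -(m : ℤ) - 1 + 1 then F (-(m : ℤ) - 1 + 1).toNat
        else B (-(-(m : ℤ) - 1 + 1)).toNat) = B m := by
      by_cases hm : m = 0
      · subst hm; simp [F, B]
      · have : ¬ ((0 : ℤ) ≤ -(m : ℤ) - 1 + 1) := by omega
        rw [if_neg this]
        congr 1
        omega
    simp only [h3, h1, if_neg (not_le.mpr hn)]
    change (v (-(m : ℤ) - 1) - B m) + B m = _
    ring

lemma recursion_bound (d e : ℤ → ℝ) (he : ∀ n, e n + e (n + 1) = - d n)
    (h0 : e 0 = - (d 0 + d (-1)) / 4) (A δ : ℝ) (hA : |d 0 + d (-1)| / 2 ≤ A)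
    (n : ℤ) (hd : ∀ i : ℤ, -|n| ≤ i → i + 2 ≤ |n| → |d i - d (i + 1)| ≤ δ) :
    |e n| ≤ A / 2 + |(n : ℝ)| * δ / 2 := by
  have key : ∀ N : ℕ, (∀ i : ℤ, -(N : ℤ) ≤ i → i + 2 ≤ N → |d i - d (i + 1)| ≤ δ) →
      |e N| ≤ A / 2 + N * δ / 2 ∧ |e (-N)| ≤ A / 2 + N * δ / 2 := by
    intro N
    induction N using Nat.strong_induction_on with
    | _ N ih =>
      intro H
      have hA' := abs_le.mp (show |d 0 + d (-1)| ≤ 2 * A by linarith)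
      rcases N with _ | _ | N
      · simp [h0, abs_le]
        constructor <;> linarith
      · have h1 := he 0
        have h2 := he (-1)
        have h3 := abs_le.mp (H (-1) (by simp) (by simp))
        norm_num at h1 h2 h3 ⊢
        rw [abs_le, abs_le]
        refine ⟨⟨?_, ?_⟩, ⟨?_, ?_⟩⟩ <;> linarith
      · obtain ⟨i1, i2⟩ := ih N (by omega) (fun i hi hi' => H i (by push_cast; omega) (by push_cast; omega))
        have a1 := he N
        have a2 := he (N + 1)
        have a3 := abs_le.mp (H N (by push_cast; omega) (by push_cast; omega))
        have b1 := he (-N - 1)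
        have b2 := he (-N - 2)
        have b3 := abs_le.mp (H (-N - 2) (by push_cast; omega) (by push_cast; omega))
        rw [show (-(N : ℤ) - 2 + 1) = -N - 1 by ring] at b2 b3
        rw [show (-(N : ℤ) - 1 + 1) = -N by ring] at b1
        rw [show ((N : ℤ) + 1 + 1) = N + 2 by ring] at a2
        rw [abs_le] at i1 i2
        push_cast
        rw [show ((N : ℤ) + 1 + 1) = N + 2 by ring, show (-((N : ℤ) + 2)) = -N - 2 by ring,
          abs_le, abs_le]
        refine ⟨⟨?_, ?_⟩, ⟨?_, ?_⟩⟩ <;> linarith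
  obtain ⟨N, hN⟩ : ∃ N : ℕ, |n| = N := ⟨n.natAbs, by simp⟩
  rw [hN] at hd
  obtain ⟨k1, k2⟩ := key N hd
  have hc : |(n : ℝ)| = N := by rw [← Int.cast_abs, hN]; simp
  rw [hc]
  rcases abs_choice n with hx | hx
  · rwa [show n = N by omega]
  · rwa [show n = -N by omega]

lemma trapezoid_bound (φ φ1 φ2 φ3 : ℝ → ℝ) (h M : ℝ) (hh : 0 < h)
    (d0 : ∀ t, HasDerivAt φ (φ1 t) t) (d1 : ∀ t, HasDerivAt φ1 (φ2 t) t)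
    (d2 : ∀ t, HasDerivAt φ2 (φ3 t) t) (hM : ∀ t ∈ Set.Icc 0 h, |φ3 t| ≤ M) :
    |h / 2 * (φ1 0 + φ1 h) - (φ h - φ 0)| ≤ h ^ 3 / 12 * M := by
  have dE' : ∀ t, HasDerivAt (fun t => t / 2 * φ2 t + (φ1 0 - φ1 t) / 2) (t / 2 * φ3 t) t := by
    intro t
    have := (((hasDerivAt_id t).div_const 2).mul (d2 t)).add (((d1 t).const_sub (φ1 0)).div_const 2)
    exact this.congr_deriv (by simp; ring)
  have dE : ∀ t, HasDerivAt (fun t => t / 2 * (φ1 0 + φ1 t) - (φ t - φ 0))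
      (t / 2 * φ2 t + (φ1 0 - φ1 t) / 2) t := by
    intro t
    have := (((hasDerivAt_id t).div_const 2).mul ((d1 t).const_add (φ1 0))).sub
      ((d0 t).sub_const (φ 0))
    exact this.congr_deriv (by simp; ring)
  have b1 : ∀ ⦃t⦄, t ∈ Set.Icc 0 h → ‖t / 2 * φ2 t + (φ1 0 - φ1 t) / 2‖ ≤ M * t ^ 2 / 4 := by
    refine image_norm_le_of_norm_deriv_right_le_deriv_boundary (B' := fun t => M * t / 2)
      (fun t _ => (dE' t).continuousAt.continuousWithinAt)
      (fun t _ => (dE' t).hasDerivWithinAt) (by simp) ?_ ?_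
    · intro t
      have := (((hasDerivAt_id t).pow 2).const_mul M).div_const 4
      exact this.congr_deriv (by simp; ring)
    · intro t ht
      have := hM t ⟨ht.1, ht.2.le⟩
      rw [Real.norm_eq_abs, abs_mul, abs_of_nonneg (by linarith [ht.1] : 0 ≤ t / 2)]
      nlinarith [ht.1]
  have b2 : ∀ ⦃t⦄, t ∈ Set.Icc 0 h →
      ‖t / 2 * (φ1 0 + φ1 t) - (φ t - φ 0)‖ ≤ M * t ^ 3 / 12 := by
    refine image_norm_le_of_norm_deriv_right_le_deriv_boundary (B' := fun t => M * t ^ 2 / 4)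
      (fun t _ => (dE t).continuousAt.continuousWithinAt)
      (fun t _ => (dE t).hasDerivWithinAt) (by simp) ?_ ?_
    · intro t
      have := (((hasDerivAt_id t).pow 3).const_mul M).div_const 12
      exact this.congr_deriv (by simp; ring)
    · intro t ht
      exact b1 ⟨ht.1, ht.2.le⟩
  have := b2 (Set.right_mem_Icc.mpr hh.le)
  rw [Real.norm_eq_abs] at this
  linarith

lemma chain_bound (v : ℤ → ℝ) (δ : ℝ) (m : ℤ)
    (hv : ∀ i : ℤ, -|m| ≤ i → i + 1 ≤ |m| → |v i - v (i + 1)| ≤ δ) :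
    |v m - v 0| ≤ |(m : ℝ)| * δ := by
  have key : ∀ N : ℕ, (∀ i : ℤ, -(N : ℤ) ≤ i → i + 1 ≤ N → |v i - v (i + 1)| ≤ δ) →
      |v N - v 0| ≤ N * δ ∧ |v (-N) - v 0| ≤ N * δ := by
    intro N
    induction N with
    | zero => intro _; simp
    | succ N ih =>
      intro H
      obtain ⟨i1, i2⟩ := ih (fun i hi hi' => H i (by push_cast; omega) (by push_cast; omega))
      have a1 := abs_le.mp (H N (by push_cast; omega) (by push_cast; omega))
      have a2 := abs_le.mp (H (-N - 1) (by push_cast; omega) (by push_cast; omega))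
      rw [show (-(N : ℤ) - 1 + 1) = -N by ring] at a2
      rw [abs_le] at i1 i2
      push_cast
      rw [show (-((N : ℤ) + 1)) = -N - 1 by ring, abs_le, abs_le]
      refine ⟨⟨?_, ?_⟩, ⟨?_, ?_⟩⟩ <;> linarith
  obtain ⟨N, hN⟩ : ∃ N : ℕ, |m| = N := ⟨m.natAbs, by simp⟩
  rw [hN] at hv
  obtain ⟨k1, k2⟩ := key N hv
  have hc : |(m : ℝ)| = N := by rw [← Int.cast_abs, hN]; simp
  rw [hc]
  rcases abs_choice m with hx | hx
  · rwa [show m = N by omega]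
  · rwa [show m = -N by omega]

lemma hasDerivAt_line (g : (Fin 2 → ℝ) → ℝ) (hg : Differentiable ℝ g) (p : Fin 2 → ℝ)
    (j : Fin 2) (t : ℝ) :
    HasDerivAt (fun t => g (p + Pi.single j t)) (pderiv2 j g (p + Pi.single j t)) t := by
  have h1 : HasDerivAt (fun t : ℝ => p + Pi.single j t) (Pi.single j (1 : ℝ)) t := by
    have := ((hasDerivAt_single j t)).const_add p
    exact this
  exact (hg _).hasFDerivAt.comp_hasDerivAt t h1

lemma contDiff_pderiv2 (g : (Fin 2 → ℝ) → ℝ) (j : Fin 2) (n m : WithTop ℕ∞)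
    (hg : ContDiff ℝ n g) (hmn : m + 1 ≤ n) : ContDiff ℝ m (pderiv2 j g) := by
  unfold pderiv2
  exact (hg.fderiv_right hmn).clm_apply contDiff_const

/-- The (signed) trapezoidal error on the edge from `p` to `p + h e_j`. -/
noncomputable def trapErr (g : (Fin 2 → ℝ) → ℝ) (h : ℝ) (j : Fin 2) (p : Fin 2 → ℝ) : ℝ :=
  h / 2 * (pderiv2 j g p + pderiv2 j g (p + Pi.single j h)) - (g (p + Pi.single j h) - g p)

lemma trapErr_diff (g : (Fin 2 → ℝ) → ℝ) (hg : ContDiff ℝ 3 g) (h : ℝ) (hh : 0 < h) (M : ℝ)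
    (j : Fin 2) (p q : Fin 2 → ℝ)
    (hM : ∀ t ∈ Set.Icc 0 h, |pderiv2 j (pderiv2 j (pderiv2 j g)) (p + Pi.single j t)
      - pderiv2 j (pderiv2 j (pderiv2 j g)) (q + Pi.single j t)| ≤ M) :
    |trapErr g h j p - trapErr g h j q| ≤ h ^ 3 / 12 * M := by
  have c1 : ContDiff ℝ 2 (pderiv2 j g) := contDiff_pderiv2 g j 3 2 hg (by norm_num)
  have c2 : ContDiff ℝ 1 (pderiv2 j (pderiv2 j g)) := contDiff_pderiv2 _ j 2 1 c1 (by norm_num)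
  have D0 := hg.differentiable (by norm_num)
  have D1 := c1.differentiable (by norm_num)
  have D2 := c2.differentiable (by norm_num)
  have := trapezoid_bound _ _ _ _ h M hh
    (fun t => (hasDerivAt_line g D0 p j t).sub (hasDerivAt_line g D0 q j t))
    (fun t => (hasDerivAt_line _ D1 p j t).sub (hasDerivAt_line _ D1 q j t))
    (fun t => (hasDerivAt_line _ D2 p j t).sub (hasDerivAt_line _ D2 q j t)) hM
  simp only [Pi.sub_apply, Pi.single_zero, add_zero] at this
  refine le_trans (le_of_eq ?_) this
  unfold trapErr
  congr 1
  ring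

/-- The point with offset `s` from `a` in direction `j` and `y` in the other direction. -/
def pt (a : Fin 2 → ℝ) (j : Fin 2) (s y : ℝ) : Fin 2 → ℝ := fun i => a i + if i = j then s else y

lemma pt_add (a : Fin 2 → ℝ) (j : Fin 2) (s y t : ℝ) :
    pt a j s y + Pi.single j t = pt a j (s + t) y := by
  ext i
  simp only [pt, Pi.add_apply, Pi.single_apply]
  split_ifs <;> ring

lemma enorm2_pt (a : Fin 2 → ℝ) (j : Fin 2) (s y s' y' r : ℝ) (hr : 0 ≤ r)
    (H : (s - s') ^ 2 + (y - y') ^ 2 ≤ r ^ 2) :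
    enorm2 (fun i => pt a j s y i - pt a j s' y' i) ≤ r := by
  unfold enorm2
  apply Real.sqrt_le_iff.mpr ⟨hr, _⟩
  fin_cases j <;> simp [pt] <;> linarith

lemma pt_zero (a : Fin 2 → ℝ) (j : Fin 2) : pt a j 0 0 = a := by
  ext i
  simp [pt]

lemma bdd_aux (a : Fin 2 → ℝ) (h R : ℝ) (g : (Fin 2 → ℝ) → ℝ) (hg : ContDiff ℝ 3 g) :
    BddAbove {c : ℝ | ∃ x' y' : Fin 2 → ℝ, ∃ j : Fin 2,
              enorm2 (fun i => x' i - a i) ≤ R + h ∧ enorm2 (fun i => y' i - a i) ≤ R + h ∧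
              enorm2 (fun i => x' i - y' i) ≤ h * Real.sqrt 2 ∧
              c = |pderiv2 j (pderiv2 j (pderiv2 j g)) x'
                    - pderiv2 j (pderiv2 j (pderiv2 j g)) y'|} := by
  have hb : ∀ j, ∃ C, ∀ x : Fin 2 → ℝ, enorm2 (fun i => x i - a i) ≤ R + h →
      |pderiv2 j (pderiv2 j (pderiv2 j g)) x| ≤ C := by
    intro j
    have c1 : ContDiff ℝ 2 (pderiv2 j g) := contDiff_pderiv2 g j 3 2 hg (by norm_num)
    have c2 : ContDiff ℝ 1 (pderiv2 j (pderiv2 j g)) := contDiff_pderiv2 _ j 2 1 c1 (by norm_num)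
    have c3 : ContDiff ℝ 0 (pderiv2 j (pderiv2 j (pderiv2 j g))) :=
      contDiff_pderiv2 _ j 1 0 c2 (by norm_num)
    obtain ⟨C, hC⟩ := (isCompact_closedBall a (R + h)).exists_bound_of_continuousOn
      c3.continuous.continuousOn
    refine ⟨C, fun x hx => hC x ?_⟩
    have h0 : 0 ≤ R + h := le_trans (Real.sqrt_nonneg _) hx
    rw [Metric.mem_closedBall, dist_pi_le_iff h0]
    have h1 := (Real.sqrt_le_iff.mp hx).2
    intro i
    rw [Real.dist_eq]
    apply abs_le_of_sq_le_sq _ h0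
    fin_cases i
    · simp only [Fin.zero_eta]; nlinarith [sq_nonneg (x 1 - a 1)]
    · simp only [Fin.mk_one]; nlinarith [sq_nonneg (x 0 - a 0)]
  choose C hC using hb
  refine ⟨2 * max (C 0) (C 1), ?_⟩
  rintro c ⟨x, y, j, hx, hy, -, rfl⟩
  have h1 := abs_le.mp (hC j x hx)
  have h2 := abs_le.mp (hC j y hy)
  have h3 : C j ≤ max (C 0) (C 1) := by fin_cases j <;> simp
  rw [abs_le]
  constructor <;> linarith

/-- **Existence of a discrete conservative approximation of a gradient** (Lemma 4.1).
With `ε(h) = sup { |D_j³g(x) − D_j³g(y)| : |x−a|, |y−a| ≤ R+h, |x−y| ≤ h√2, j = 1,2 }`,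
there is a discrete conservative vector field `f` on `G(a,h)` with
`|f(x) − ∇g(x)| ≤ (R/6)·h·ε(h)` for all grid points `x` with `|x − a| ≤ R`. -/
theorem exists_discreteConservative_approx_grad
    (a : Fin 2 → ℝ) (h : ℝ) (hh : 0 < h) (R : ℝ) (hR : 0 < R)
    (g : (Fin 2 → ℝ) → ℝ) (hg : ContDiff ℝ 3 g) :
    ∃ f : (Fin 2 → ℝ) → Fin 2 → ℝ, DiscreteConservative 2 a h f ∧
      ∀ x : Fin 2 → ℝ, InGrid 2 a h x → enorm2 (fun i => x i - a i) ≤ R →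
        enorm2 (fun j => f x j - pderiv2 j g x)
          ≤ R / 6 * h *
            sSup {c : ℝ | ∃ x' y' : Fin 2 → ℝ, ∃ j : Fin 2,
              enorm2 (fun i => x' i - a i) ≤ R + h ∧ enorm2 (fun i => y' i - a i) ≤ R + h ∧
              enorm2 (fun i => x' i - y' i) ≤ h * Real.sqrt 2 ∧
              c = |pderiv2 j (pderiv2 j (pderiv2 j g)) x'
                    - pderiv2 j (pderiv2 j (pderiv2 j g)) y'|} := by
  classical
  set ε := sSup {c : ℝ | ∃ x' y' : Fin 2 → ℝ, ∃ j : Fin 2,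
              enorm2 (fun i => x' i - a i) ≤ R + h ∧ enorm2 (fun i => y' i - a i) ≤ R + h ∧
              enorm2 (fun i => x' i - y' i) ≤ h * Real.sqrt 2 ∧
              c = |pderiv2 j (pderiv2 j (pderiv2 j g)) x'
                    - pderiv2 j (pderiv2 j (pderiv2 j g)) y'|} with hε
  have hε0 : 0 ≤ ε := by
    apply Real.sSup_nonneg
    rintro c ⟨x, y, j, -, -, -, rfl⟩
    exact abs_nonneg _
  -- the scaled trapezoidal error on the edge in direction `j`
  let W : Fin 2 → ℤ → ℤ → ℝ := fun j n m => 2 / h * trapErr g h j (pt a j (h * n) (h * m))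
  let δ := h ^ 2 / 6 * ε
  have hδ0 : 0 ≤ δ := by positivity
  have hW : ∀ (j : Fin 2) (n m n' m' : ℤ),
      ((n : ℝ) - n') ^ 2 + ((m : ℝ) - m') ^ 2 ≤ 1 →
      (∀ t ∈ Set.Icc 0 h, (h * n + t) ^ 2 + (h * m) ^ 2 ≤ (R + h) ^ 2) →
      (∀ t ∈ Set.Icc 0 h, (h * n' + t) ^ 2 + (h * m') ^ 2 ≤ (R + h) ^ 2) →
      |W j n m - W j n' m'| ≤ δ := by
    intro j n m n' m' hd h1 h2
    have := trapErr_diff g hg h hh ε j (pt a j (h * n) (h * m)) (pt a j (h * n') (h * m')) ?_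
    · simp only [W, δ]
      rw [← mul_sub, abs_mul, abs_of_pos (by positivity)]
      calc _ ≤ 2 / h * (h ^ 3 / 12 * ε) := by gcongr
        _ = _ := by field_simp; ring
    · intro t ht
      rw [pt_add, pt_add]
      apply le_csSup (bdd_aux a h R g hg)
      refine ⟨_, _, j, ?_, ?_, ?_, rfl⟩
      · have := enorm2_pt a j (h * n + t) (h * m) 0 0 (R + h) (by positivity)
          (by simpa using h1 t ht)
        rwa [pt_zero] at this
      · have := enorm2_pt a j (h * n' + t) (h * m') 0 0 (R + h) (by positivity)
          (by simpa using h2 t ht)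
        rwa [pt_zero] at this
      · apply enorm2_pt _ _ _ _ _ _ _ (by positivity)
        rw [mul_pow, Real.sq_sqrt (by norm_num)]
        nlinarith [sq_nonneg h]
  let C : Fin 2 → ℝ := fun j => (W j 0 0 + W j (-1) 0) / 2
  have hex : ∀ (j : Fin 2) (m : ℤ), ∃ e : ℤ → ℝ,
      e 0 = -((W j 0 m - C j) + (W j (-1) m - C j)) / 4 ∧
      ∀ n, e n + e (n + 1) = -(W j n m - C j) := fun j m => exists_recursion _ _
  choose e he0 he using hex
  have hsq : ∀ i n : ℤ, -|n| ≤ i → i ≤ |n| → (i : ℝ) ^ 2 ≤ (n : ℝ) ^ 2 := by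
    intro i n h1 h2
    exact_mod_cast sq_le_sq.mpr (abs_le.mpr ⟨h1, h2⟩)
  have hbound : ∀ (j : Fin 2) (n m : ℤ), (h * n) ^ 2 + (h * m) ^ 2 ≤ R ^ 2 →
      |e j m n| ≤ (|(m : ℝ)| + |(n : ℝ)|) * δ / 2 := by
    intro j n m hnm
    -- the starting column
    have hcol : ∀ s : ℤ, s = 0 ∨ s = -1 → |W j s m - W j s 0| ≤ |(m : ℝ)| * δ := by
      intro s hs
      apply chain_bound (fun m => W j s m)
      have hm : ∀ i : ℤ, (i : ℝ) ^ 2 ≤ (m : ℝ) ^ 2 →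
          ∀ t ∈ Set.Icc 0 h, (h * s + t) ^ 2 + (h * i) ^ 2 ≤ (R + h) ^ 2 := by
        intro i hi t ht
        have h1 : (h * s + t) ^ 2 ≤ h ^ 2 := by
          apply sq_le_sq'
          all_goals rcases hs with rfl | rfl <;> push_cast <;> linarith [ht.1, ht.2]
        nlinarith [mul_le_mul_of_nonneg_left hi (sq_nonneg h), sq_nonneg (h * (n : ℝ)),
          mul_pos hh hR]
      intro i h1 h2
      apply hW
      · push_cast; ring_nf; norm_num
      · exact hm i (hsq i m h1 (by omega))
      · exact hm (i + 1) (hsq (i + 1) m (by omega) h2)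
    have c0 := abs_le.mp (hcol 0 (Or.inl rfl))
    have c1 := abs_le.mp (hcol (-1) (Or.inr rfl))
    have := recursion_bound (fun n => W j n m - C j) (e j m) (he j m) (he0 j m)
      (|(m : ℝ)| * δ) δ ?_ n ?_
    · linarith
    · have : |W j 0 m - C j + (W j (-1) m - C j)| ≤ 2 * (|(m : ℝ)| * δ) := by
        simp only [C]
        rw [abs_le]
        constructor <;> linarith
      linarith
    · intro i h1 h2
      have hm : ∀ i : ℤ, -|n| ≤ i → i + 1 ≤ |n| →
          ∀ t ∈ Set.Icc 0 h, (h * i + t) ^ 2 + (h * m) ^ 2 ≤ (R + h) ^ 2 := by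
        intro i h1 h2 t ht
        have h1' : -|(n : ℝ)| ≤ i := by exact_mod_cast h1
        have h2' : (i : ℝ) + 1 ≤ |(n : ℝ)| := by exact_mod_cast h2
        have h3 : (h * i + t) ^ 2 ≤ (h * |(n : ℝ)|) ^ 2 := by
          apply sq_le_sq'
          · nlinarith [ht.1]
          · nlinarith [ht.2]
        rw [mul_pow h, sq_abs, ← mul_pow] at h3
        nlinarith [mul_pos hh hR]
      have e1 : (W j i m - C j) - (W j (i + 1) m - C j) = W j i m - W j (i + 1) m := by ring
      simp only [e1]
      apply hW
      · push_cast; ring_nf; norm_num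
      · exact hm i h1 (by omega)
      · exact hm (i + 1) (by omega) (by omega)
  -- the field
  let κ : (Fin 2 → ℝ) → Fin 2 → ℤ := fun x i => round ((x i - a i) / h)
  have hκ : ∀ (x : Fin 2 → ℝ) (k : Fin 2 → ℤ), (∀ i, x i = a i + h * k i) → κ x = k := by
    intro x k hk
    ext i
    simp only [κ, hk i]
    rw [add_sub_cancel_left, mul_div_cancel_left₀ _ hh.ne', round_intCast]
  have hpt : ∀ (x : Fin 2 → ℝ) (k : Fin 2 → ℤ), (∀ i, x i = a i + h * k i) → ∀ j,
      x = pt a j (h * k j) (h * k (1 - j)) := by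
    intro x k hk j
    ext i
    rw [hk i]
    fin_cases i <;> fin_cases j <;> simp [pt]
  refine ⟨fun x j => pderiv2 j g x + e j (κ x (1 - j)) (κ x j), ?_, ?_⟩
  · apply conservative_of_potential a h _
      (fun x => g x + (C 0 * (x 0 - a 0) + C 1 * (x 1 - a 1)) / 2)
    rintro x ⟨k, hk⟩ j
    have k1 := hκ x k hk
    have k2 := hκ (x + Pi.single j h) (k + Pi.single j 1) (by
      intro i
      simp only [Pi.add_apply, hk i, Pi.single_apply]
      split_ifs <;> push_cast <;> ring)
    have hj : (1 - j) ≠ j := by fin_cases j <;> decide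
    have k3 : (k + Pi.single j 1 : Fin 2 → ℤ) j = k j + 1 := by simp
    have k4 : (k + Pi.single j 1 : Fin 2 → ℤ) (1 - j) = k (1 - j) := by simp [hj]
    simp only [k1, k2, k3, k4]
    have h1 := he j (k (1 - j)) (k j)
    have h2 : h / 2 * W j (k j) (k (1 - j)) = trapErr g h j x := by
      rw [hpt x k hk j]
      simp only [W]
      rw [← hpt x k hk j]
      field_simp
    have h3 : (C 0 * ((x + Pi.single j h : Fin 2 → ℝ) 0 - a 0) + C 1 * ((x + Pi.single j h : Fin 2 → ℝ) 1 - a 1)) / 2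
        = (C 0 * (x 0 - a 0) + C 1 * (x 1 - a 1)) / 2 + h / 2 * C j := by
      fin_cases j <;> simp <;> ring
    rw [h3]
    unfold trapErr at h2
    linear_combination h / 2 * h1 - h2
  · rintro x ⟨k, hk⟩ hx
    have hx2 := (Real.sqrt_le_iff.mp hx).2
    simp only [hk, add_sub_cancel_left] at hx2
    simp only [hκ x k hk, add_sub_cancel_left]
    have b0 := hbound 0 (k 0) (k 1) hx2
    have b1 := hbound 1 (k 1) (k 0) (by linarith)
    unfold enorm2
    apply Real.sqrt_le_iff.mpr ⟨by positivity, _⟩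
    have q0 : (e 0 (k 1) (k 0)) ^ 2 ≤ ((|(k 1 : ℝ)| + |(k 0 : ℝ)|) * δ / 2) ^ 2 :=
      sq_le_sq' (abs_le.mp b0).1 (abs_le.mp b0).2
    have q1 : (e 1 (k 0) (k 1)) ^ 2 ≤ ((|(k 0 : ℝ)| + |(k 1 : ℝ)|) * δ / 2) ^ 2 :=
      sq_le_sq' (abs_le.mp b1).1 (abs_le.mp b1).2
    have q2 : ((|(k 0 : ℝ)| + |(k 1 : ℝ)|) * δ / 2) ^ 2 * 2 ≤ (k 0 ^ 2 + k 1 ^ 2) * δ ^ 2 := by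
      rw [← sq_abs (k 0 : ℝ), ← sq_abs (k 1 : ℝ)]
      nlinarith [mul_nonneg (sq_nonneg (|(k 0 : ℝ)| - |(k 1 : ℝ)|)) (sq_nonneg δ)]
    have q3 : ((k 0 : ℝ) ^ 2 + k 1 ^ 2) * δ ^ 2 ≤ (R / 6 * h * ε) ^ 2 := by
      have := mul_le_mul_of_nonneg_right hx2 (sq_nonneg (h * ε / 6))
      simp only [δ]
      nlinarith
    rw [add_comm |(k 1 : ℝ)|] at q0
    have e1 : (1 : Fin 2) - 0 = 1 := rfl
    have e2 : (1 : Fin 2) - 1 = 0 := rfl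
    simp only [e1, e2]
    linarith
end

section
/- Boundary formula for the error between a grid sum and the integral of the piecewise-linear interpolation (identity from the proof of Lemma A.1). Let h > 0, n ≥ 1, x_i = x_0 + ih and y_j = y_0 + jh for 0 ≤ i, j ≤ n, and let f be a real-valued function defined on the grid points (x_i, y_j). Let f̄ be the piecewise-linear interpolation of f on the grid triangles. Set S_n := h² Σ_{i=1}^{n} Σ_{j=1}^{n} f(x_{i−1}, y_{j−1}) and T_n := ∫_{[x_0, x_n) × [y_0, y_n)} f̄(x,y) dx dy. Then T_n − S_n = (h²/2) Σ_{i=1}^{n−1} { f(x_i, y_n) + f(x_n, y_i) − f(x_0, y_i) − f(x_i, y_0) } + (h²/6) { 2 f(x_0, y_n) + 2 f(x_n, y_0) + f(x_n, y_n) − 5 f(x_0, y_0) }. -/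
/- Boundary formula for the error between a grid sum and the integral of the
piecewise-linear interpolation (identity from the proof of Lemma A.1). -/

open MeasureTheory

/-- The piecewise-linear interpolation of grid values `f : ℤ → ℤ → ℝ` (value `f i j` at
the grid point `(x₀ + i h, y₀ + j h)`) on the triangles of the grid of mesh `h`:
on the lower triangle (where `s + t ≤ 1`, with `s, t` the local coordinates) it is the
affine function with the values of `f` at the three vertices
`(x_i, y_j), (x_i + h, y_j), (x_i, y_j + h)`, and on the upper triangle the affine
function with the values of `f` at `(x_i + h, y_j), (x_i, y_j + h), (x_i + h, y_j + h)`. -/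
noncomputable def gridInterp (h x₀ y₀ : ℝ) (f : ℤ → ℤ → ℝ) (p : ℝ × ℝ) : ℝ :=
  let i : ℤ := ⌊(p.1 - x₀) / h⌋
  let j : ℤ := ⌊(p.2 - y₀) / h⌋
  let s : ℝ := (p.1 - x₀) / h - i
  let t : ℝ := (p.2 - y₀) / h - j
  if s + t ≤ 1 then
    f i j + s * (f (i + 1) j - f i j) + t * (f i (j + 1) - f i j)
  else
    f (i + 1) (j + 1) + (1 - s) * (f i (j + 1) - f (i + 1) (j + 1))
      + (1 - t) * (f (i + 1) j - f (i + 1) (j + 1))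

lemma gi_inner (α β κ s : ℝ) (h0 : 0 ≤ s) (h1 : s ≤ 1) :
    ∫ t in (0:ℝ)..1, (α + β * t + κ * max 0 (1 - s - t)) = α + β / 2 + κ * ((1 - s) ^ 2 / 2) := by
  have hm : ∫ t in (0:ℝ)..1, max 0 (1 - s - t) = (1 - s) ^ 2 / 2 := by
    have hc : Continuous fun t : ℝ => max 0 (1 - s - t) := by fun_prop
    rw [← intervalIntegral.integral_add_adjacent_intervals (b := 1 - s)
      (hc.intervalIntegrable _ _) (hc.intervalIntegrable _ _)]
    have e1 : ∫ t in (0:ℝ)..(1 - s), max 0 (1 - s - t) = ∫ t in (0:ℝ)..(1 - s), (1 - s - t) := by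
      apply intervalIntegral.integral_congr
      intro t ht
      rw [Set.uIcc_of_le (by linarith)] at ht
      exact max_eq_right (by linarith [ht.2])
    have e2 : ∫ t in (1 - s)..1, max 0 (1 - s - t) = ∫ t in (1 - s)..1, (0:ℝ) := by
      apply intervalIntegral.integral_congr
      intro t ht
      rw [Set.uIcc_of_le (by linarith)] at ht
      exact max_eq_left (by linarith [ht.1])
    rw [e1, e2, intervalIntegral.integral_sub (by simp) (by simp)]
    simp
    ring
  rw [intervalIntegral.integral_add (Continuous.intervalIntegrable (by fun_prop) _ _)
    (Continuous.intervalIntegrable (by fun_prop) _ _),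
    intervalIntegral.integral_add (Continuous.intervalIntegrable (by fun_prop) _ _)
    (Continuous.intervalIntegrable (by fun_prop) _ _),
    intervalIntegral.integral_const_mul, intervalIntegral.integral_const_mul, hm]
  simp
  ring

lemma gi_outer (α β κ : ℝ) :
    ∫ s in (0:ℝ)..1, (α + β * s + κ * ((1 - s) ^ 2 / 2)) = α + β / 2 + κ / 6 := by
  have hm : ∫ s in (0:ℝ)..1, ((1 - s) ^ 2 / 2) = 1 / 6 := by
    rw [intervalIntegral.integral_div,
      intervalIntegral.integral_comp_sub_left (fun s : ℝ => s ^ 2) 1]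
    simp
    norm_num
  rw [intervalIntegral.integral_add (Continuous.intervalIntegrable (by fun_prop) _ _)
    (Continuous.intervalIntegrable (by fun_prop) _ _),
    intervalIntegral.integral_add (Continuous.intervalIntegrable (by fun_prop) _ _)
    (Continuous.intervalIntegrable (by fun_prop) _ _),
    intervalIntegral.integral_const_mul, intervalIntegral.integral_const_mul, hm]
  simp
  ring

/-- Continuous local form of the interpolation. -/
noncomputable def giG (A B C D s t : ℝ) : ℝ :=
  (B + C - D) + s * (D - C) + t * (D - B) + (A - B - C + D) * max 0 (1 - s - t)

lemma gi_subst (h a : ℝ) (hh : 0 < h) (F : ℝ → ℝ) :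
    ∫ x in Set.Ico a (a + h), F ((x - a) / h) = h * ∫ s in (0:ℝ)..1, F s := by
  rw [integral_Ico_eq_integral_Ioc, ← intervalIntegral.integral_of_le (by linarith)]
  rw [intervalIntegral.integral_comp_sub_right (fun x => F (x / h)) a,
    intervalIntegral.integral_comp_div F hh.ne']
  simp [hh.ne']

lemma gi_cell (h a b : ℝ) (hh : 0 < h) (A B C D : ℝ) :
    IntegrableOn (fun p : ℝ × ℝ => giG A B C D ((p.1 - a) / h) ((p.2 - b) / h))
      (Set.Ico a (a + h) ×ˢ Set.Ico b (b + h)) ∧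
    ∫ p in Set.Ico a (a + h) ×ˢ Set.Ico b (b + h),
      giG A B C D ((p.1 - a) / h) ((p.2 - b) / h) = h ^ 2 / 6 * (A + 2 * B + 2 * C + D) := by
  have hi : IntegrableOn (fun p : ℝ × ℝ => giG A B C D ((p.1 - a) / h) ((p.2 - b) / h))
      (Set.Ico a (a + h) ×ˢ Set.Ico b (b + h)) := by
    have hc : Continuous (fun p : ℝ × ℝ => giG A B C D ((p.1 - a) / h) ((p.2 - b) / h)) := by
      unfold giG
      fun_prop
    exact (hc.continuousOn.integrableOn_compact
      ((isCompact_Icc (a := a) (b := a + h)).prod (isCompact_Icc (a := b) (b := b + h)))).mono_set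
      (Set.prod_mono Set.Ico_subset_Icc_self Set.Ico_subset_Icc_self)
  refine ⟨hi, ?_⟩
  rw [Measure.volume_eq_prod] at hi ⊢
  rw [setIntegral_prod _ hi]
  simp only
  have e : ∀ x : ℝ, ∫ y in Set.Ico b (b + h), giG A B C D ((x - a) / h) ((y - b) / h)
      = h * ∫ t in (0:ℝ)..1, giG A B C D ((x - a) / h) t := fun x =>
    gi_subst h b hh (giG A B C D ((x - a) / h))
  simp only [e]
  rw [gi_subst h a hh (fun s => h * ∫ t in (0:ℝ)..1, giG A B C D s t)]
  have e3 : ∫ s in (0:ℝ)..1, (h * ∫ t in (0:ℝ)..1, giG A B C D s t)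
      = ∫ s in (0:ℝ)..1, h * ((B + C - D) + (D - B) / 2 + (D - C) * s
        + (A - B - C + D) * ((1 - s) ^ 2 / 2)) := by
    apply intervalIntegral.integral_congr
    intro s hs
    rw [Set.uIcc_of_le (by norm_num)] at hs
    have := gi_inner ((B + C - D) + s * (D - C)) (D - B) (A - B - C + D) s hs.1 hs.2
    have e4 : ∫ t in (0:ℝ)..1, giG A B C D s t
      = ∫ t in (0:ℝ)..1, ((B + C - D) + s * (D - C) + (D - B) * t
        + (A - B - C + D) * max 0 (1 - s - t)) := by
      congr 1
      ext t
      unfold giG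
      ring
    simp only [e4, this]
    ring
  rw [e3, intervalIntegral.integral_const_mul, gi_outer]
  ring

lemma gi_floor (h x₀ x : ℝ) (hh : 0 < h) (i : ℤ)
    (hx : x ∈ Set.Ico (x₀ + i * h) (x₀ + i * h + h)) : ⌊(x - x₀) / h⌋ = i := by
  rw [Int.floor_eq_iff, le_div_iff₀ hh, div_lt_iff₀ hh]
  constructor <;> linarith [hx.1, hx.2]

lemma gi_eq (h x₀ y₀ : ℝ) (hh : 0 < h) (f : ℤ → ℤ → ℝ) (i j : ℤ) (p : ℝ × ℝ)
    (hp : p ∈ Set.Ico (x₀ + i * h) (x₀ + i * h + h) ×ˢ Set.Ico (y₀ + j * h) (y₀ + j * h + h)) :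
    gridInterp h x₀ y₀ f p = giG (f i j) (f (i + 1) j) (f i (j + 1)) (f (i + 1) (j + 1))
      ((p.1 - (x₀ + i * h)) / h) ((p.2 - (y₀ + j * h)) / h) := by
  have ei := gi_floor h x₀ p.1 hh i hp.1
  have ej := gi_floor h y₀ p.2 hh j hp.2
  have es : (p.1 - (x₀ + i * h)) / h = (p.1 - x₀) / h - i := by field_simp; ring
  have et : (p.2 - (y₀ + j * h)) / h = (p.2 - y₀) / h - j := by field_simp; ring
  rw [es, et]
  unfold gridInterp giG
  simp only [ei, ej]
  split_ifs with hs
  · rw [max_eq_right (by linarith)]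
    ring
  · rw [max_eq_left (by linarith)]
    ring

lemma gi_cell_int (h x₀ y₀ : ℝ) (hh : 0 < h) (f : ℤ → ℤ → ℝ) (i j : ℤ) :
    IntegrableOn (gridInterp h x₀ y₀ f)
      (Set.Ico (x₀ + i * h) (x₀ + i * h + h) ×ˢ Set.Ico (y₀ + j * h) (y₀ + j * h + h)) ∧
    ∫ p in Set.Ico (x₀ + i * h) (x₀ + i * h + h) ×ˢ Set.Ico (y₀ + j * h) (y₀ + j * h + h),
      gridInterp h x₀ y₀ f p
      = h ^ 2 / 6 * (f i j + 2 * f (i + 1) j + 2 * f i (j + 1) + f (i + 1) (j + 1)) := by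
  have hc := gi_cell h (x₀ + i * h) (y₀ + j * h) hh (f i j) (f (i + 1) j) (f i (j + 1))
    (f (i + 1) (j + 1))
  have hms : MeasurableSet (Set.Ico (x₀ + i * h) (x₀ + i * h + h) ×ˢ
    Set.Ico (y₀ + j * h) (y₀ + j * h + h)) := measurableSet_Ico.prod measurableSet_Ico
  constructor
  · exact hc.1.congr_fun (fun p hp => (gi_eq h x₀ y₀ hh f i j p hp).symm) hms
  · rw [← hc.2]
    exact setIntegral_congr_fun hms (fun p hp => gi_eq h x₀ y₀ hh f i j p hp)

lemma gi_mem (h x₀ : ℝ) (hh : 0 < h) (n : ℕ) (x : ℝ) :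
    x ∈ Set.Ico x₀ (x₀ + n * h) ↔
      ∃ i ∈ Finset.range n, x ∈ Set.Ico (x₀ + ((i : ℕ) : ℤ) * h) (x₀ + ((i : ℕ) : ℤ) * h + h) := by
  constructor
  · rintro ⟨h1, h2⟩
    have h0 : 0 ≤ (x - x₀) / h := div_nonneg (by linarith) hh.le
    refine ⟨⌊(x - x₀) / h⌋₊, ?_, ?_⟩
    · rw [Finset.mem_range, Nat.floor_lt h0, div_lt_iff₀ hh]
      linarith
    · have a1 := Nat.floor_le h0
      have a2 := Nat.lt_floor_add_one ((x - x₀) / h)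
      rw [le_div_iff₀ hh] at a1
      rw [div_lt_iff₀ hh] at a2
      constructor <;> push_cast <;> linarith
  · rintro ⟨i, hi, h1, h2⟩
    rw [Finset.mem_range] at hi
    have hi' : (i : ℝ) + 1 ≤ n := by exact_mod_cast hi
    push_cast at h1 h2
    have : (0:ℝ) ≤ i * h := by positivity
    constructor
    · linarith
    · nlinarith

lemma gi_total (h : ℝ) (hh : 0 < h) (n : ℕ) (x₀ y₀ : ℝ) (f : ℤ → ℤ → ℝ) :
    (∫ p in (Set.Ico x₀ (x₀ + n * h) ×ˢ Set.Ico y₀ (y₀ + n * h)), gridInterp h x₀ y₀ f p)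
    = ∑ i ∈ Finset.range n, ∑ j ∈ Finset.range n, h ^ 2 / 6 *
      (f i j + 2 * f (i + 1) j + 2 * f i (j + 1) + f (i + 1) (j + 1)) := by
  have hU : Set.Ico x₀ (x₀ + n * h) ×ˢ Set.Ico y₀ (y₀ + n * h)
      = ⋃ q ∈ Finset.range n ×ˢ Finset.range n,
        (Set.Ico (x₀ + ((q.1 : ℕ) : ℤ) * h) (x₀ + ((q.1 : ℕ) : ℤ) * h + h) ×ˢ
          Set.Ico (y₀ + ((q.2 : ℕ) : ℤ) * h) (y₀ + ((q.2 : ℕ) : ℤ) * h + h)) := by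
    ext p
    rw [Set.mem_prod, gi_mem h x₀ hh, gi_mem h y₀ hh]
    simp only [Set.mem_iUnion, Finset.mem_product, Set.mem_prod, exists_prop, Prod.exists]
    constructor
    · rintro ⟨⟨i, hi, hx⟩, ⟨j, hj, hy⟩⟩
      exact ⟨i, j, ⟨hi, hj⟩, hx, hy⟩
    · rintro ⟨i, j, ⟨hi, hj⟩, hx, hy⟩
      exact ⟨⟨i, hi, hx⟩, ⟨j, hj, hy⟩⟩
  rw [hU, integral_biUnion_finset]
  · rw [Finset.sum_product]
    exact Finset.sum_congr rfl fun i _ => Finset.sum_congr rfl fun j _ =>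
      (gi_cell_int h x₀ y₀ hh f i j).2
  · intro q _
    exact measurableSet_Ico.prod measurableSet_Ico
  · intro q _ r _ hqr
    rw [Function.onFun, Set.disjoint_left]
    intro p hp hp'
    apply hqr
    have a1 := gi_floor h x₀ p.1 hh _ hp.1
    have a2 := gi_floor h x₀ p.1 hh _ hp'.1
    have b1 := gi_floor h y₀ p.2 hh _ hp.2
    have b2 := gi_floor h y₀ p.2 hh _ hp'.2
    ext
    · exact_mod_cast a1.symm.trans a2
    · exact_mod_cast b1.symm.trans b2
  · intro q _
    exact (gi_cell_int h x₀ y₀ hh f q.1 q.2).1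

lemma gi_shift (F : ℤ → ℝ) (n : ℕ) :
    ∑ i ∈ Finset.range n, F (i + 1) = ∑ i ∈ Finset.range n, F i + F n - F 0 := by
  induction n with
  | zero => simp
  | succ k ih =>
    rw [Finset.sum_range_succ, Finset.sum_range_succ, ih]
    push_cast
    ring

lemma gi_Ico (F : ℤ → ℝ) (n : ℕ) (hn : 1 ≤ n) :
    ∑ i ∈ Finset.Ico 1 (n : ℤ), F i = ∑ i ∈ Finset.range n, F i - F 0 := by
  induction n, hn using Nat.le_induction with
  | base => simp
  | succ k hk ih =>
    have : Finset.Ico 1 ((k + 1 : ℕ) : ℤ) = insert (k : ℤ) (Finset.Ico 1 (k : ℤ)) := by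
      ext x
      simp only [Finset.mem_Ico, Finset.mem_insert]
      omega
    rw [this, Finset.sum_insert (by simp), ih, Finset.sum_range_succ]
    ring

/-- **Boundary formula** for the error between the grid sum
`S_n = h² Σ_{i=1}^{n} Σ_{j=1}^{n} f(x_{i−1}, y_{j−1})` and the integral
`T_n = ∫_{[x₀,x_n) × [y₀,y_n)} f̄` of the piecewise-linear interpolation `f̄`:
only boundary vertices contribute to `T_n − S_n`. -/
theorem interp_integral_sub_gridSum
    (h : ℝ) (hh : 0 < h) (n : ℕ) (hn : 1 ≤ n) (x₀ y₀ : ℝ) (f : ℤ → ℤ → ℝ) :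
    (∫ p in (Set.Ico x₀ (x₀ + n * h) ×ˢ Set.Ico y₀ (y₀ + n * h)), gridInterp h x₀ y₀ f p)
      - h ^ 2 * ∑ i ∈ Finset.range n, ∑ j ∈ Finset.range n, f i j
    = h ^ 2 / 2 * ∑ i ∈ Finset.Ico 1 (n : ℤ),
        (f i n + f n i - f 0 i - f i 0)
      + h ^ 2 / 6 * (2 * f 0 n + 2 * f n 0 + f n n - 5 * f 0 0) := by
  rw [gi_total h hh, gi_Ico _ n hn]
  simp only [← Finset.mul_sum, Finset.sum_add_distrib, Finset.sum_sub_distrib]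
  have s1 : ∀ i : ℤ, ∑ j ∈ Finset.range n, f i (j + 1)
      = ∑ j ∈ Finset.range n, f i j + f i n - f i 0 := fun i => gi_shift (fun j => f i j) n
  have s2 := gi_shift (fun i => ∑ j ∈ Finset.range n, f i j) n
  have s3 := gi_shift (fun i => f i n) n
  have s4 := gi_shift (fun i => f i 0) n
  simp only [s1, Finset.sum_add_distrib, Finset.sum_sub_distrib]
  rw [s2, s3, s4]
  ring
end
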